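/- Let k be a field and let Q₁, Q₂, S be homogeneous degree-2 polynomials in k[u,v]. Setting P₁ = Q₂², P₂ = Q₁S, P₃ = Q₁Q₂, one has det A_{P₁,P₂,P₃} = Res(Q₁,Q₂)² · Res(S,Q₂). -/

import Mathlib

open MvPolynomial

noncomputable section

/-- The coefficient of `u^i v^j` in a polynomial in `k[u,v]`
(variables `X 0 = u`, `X 1 = v`). -/
def coeffUV {k : Type*} [Field k] (i j : ℕ) (P : MvPolynomial (Fin 2) k) : k :=
  MvPolynomial.coeff (Finsupp.single 0 i + Finsupp.single 1 j) P

/-- For homogeneous degree-4 polynomials `P₁, P₂, P₃` in `k[u,v]`, the `6×6` matrix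
whose columns are the coefficient vectors of `u·P₁, v·P₁, u·P₂, v·P₂, u·P₃, v·P₃`
with respect to the basis `u⁵, u⁴v, u³v², u²v³, uv⁴, v⁵`. -/
def Amat {k : Type*} [Field k] (P₁ P₂ P₃ : MvPolynomial (Fin 2) k) :
    Matrix (Fin 6) (Fin 6) k :=
  Matrix.of fun i j =>
    coeffUV (5 - (i : ℕ)) (i : ℕ)
      ((![X 0 * P₁, X 1 * P₁, X 0 * P₂, X 1 * P₂, X 0 * P₃, X 1 * P₃] :
          Fin 6 → MvPolynomial (Fin 2) k) j)

/-- The resultant of two binary quadratic forms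
`Q = q₂u² + q₁uv + q₀v²` and `Q' = q₂'u² + q₁'uv + q₀'v²`:
`(q₂q₀' − q₀q₂')² − (q₂q₁' − q₁q₂')(q₁q₀' − q₀q₁')`. -/
def Res2 {k : Type*} [Field k] (Q Q' : MvPolynomial (Fin 2) k) : k :=
  (coeffUV 2 0 Q * coeffUV 0 2 Q' - coeffUV 0 2 Q * coeffUV 2 0 Q') ^ 2 -
    (coeffUV 2 0 Q * coeffUV 1 1 Q' - coeffUV 1 1 Q * coeffUV 2 0 Q') *
      (coeffUV 1 1 Q * coeffUV 0 2 Q' - coeffUV 0 2 Q * coeffUV 1 1 Q')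

/-!
After dehomogenizing, the columns of the matrix are the coefficient vectors of the multiples of
`f ^ 2`, `g * s` and `g * f` by `1` and `X`, where `f`, `g`, `s` come from `Q₂`, `Q₁`, `S`. The map
`(a, b, c) ↦ a * f ^ 2 + g * (b * s + c * f)` it represents is the Sylvester map
`(b, c) ↦ b * s + c * f` of `f` and `s`, followed by the Sylvester map `(a, d) ↦ a * f ^ 2 + g * d`
of `g` and `f ^ 2`. Hence the determinant is a product of two resultants, and
`Res(g, f ^ 2) = Res(g, f) ^ 2`.
-/

open scoped Polynomial

/-- The square matrix whose `j`-th column lists the coefficients of `1, X, …, X ^ (n - 1)` in `p j`;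
higher coefficients of `p j` are ignored. -/
def coeffMatrix {R : Type*} [Semiring R] {n : ℕ} (p : Fin n → R[X]) : Matrix (Fin n) (Fin n) R :=
  Matrix.of fun i j => (p j).coeff i

/-- The multiples `p, X * p, …, X ^ (n - 1) * p`, which span the multiples of `p` by polynomials of
degree less than `n`. -/
def xPowMultiples {R : Type*} [Semiring R] (p : R[X]) (n : ℕ) : Fin n → R[X] :=
  fun j => Polynomial.X ^ (j : ℕ) * p

section CoeffMatrix

variable {R : Type*}

lemma degree_xPowMultiples_lt [Semiring R] {p : R[X]} {m n : ℕ} (hp : p.natDegree ≤ m)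
    (j : Fin n) : (xPowMultiples p n j).degree < (m + n : ℕ) := by
  rw [Polynomial.degree_lt_iff_coeff_zero]
  intro k hk
  rw [xPowMultiples, Polynomial.coeff_X_pow_mul', if_pos (by lia)]
  exact Polynomial.coeff_eq_zero_of_natDegree_lt (by lia)

lemma sylvester_eq_coeffMatrix [Semiring R] {f g : R[X]} {m n : ℕ} (hf : f.natDegree ≤ m)
    (hg : g.natDegree ≤ n) :
    Polynomial.sylvester f g m n =
      coeffMatrix (Fin.append (xPowMultiples g m) (xPowMultiples f n)) := by
  have coeff_eq {p : R[X]} {d i j : ℕ} (hp : p.natDegree ≤ d) :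
      (if j ≤ i ∧ i ≤ j + d then p.coeff (i - j) else 0) = (Polynomial.X ^ j * p).coeff i := by
    rw [Polynomial.coeff_X_pow_mul', ite_and]
    split_ifs with hj hd
    · rfl
    · exact (Polynomial.coeff_eq_zero_of_natDegree_lt (by lia)).symm
    · rfl
  ext i j
  refine j.addCases (fun j => ?_) fun j => ?_
  · simpa [Polynomial.sylvester, coeffMatrix, xPowMultiples] using coeff_eq hg
  · simpa [Polynomial.sylvester, coeffMatrix, xPowMultiples] using coeff_eq hf

lemma sum_coeff_xPowMultiples_mul_coeff [CommSemiring R] (g : R[X]) {q : R[X]} {n : ℕ}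
    (hq : q.degree < n) (i : ℕ) :
    ∑ j : Fin n, (xPowMultiples g n j).coeff i * q.coeff j = (g * q).coeff i := by
  have q_eq : ∑ j : Fin n, Polynomial.C (q.coeff j) * Polynomial.X ^ (j : ℕ) = q :=
    (Polynomial.sum_fin (fun j a => Polynomial.C a * Polynomial.X ^ j) (by simp) hq).trans
      q.sum_C_mul_X_pow_eq
  conv_rhs => rw [← q_eq, Finset.mul_sum, Polynomial.finsetSum_coeff]
  refine Finset.sum_congr rfl fun j _ => ?_
  rw [xPowMultiples, mul_comm, ← Polynomial.coeff_C_mul]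
  congr 1
  ring

lemma coeffMatrix_append_mul_eq_sylvester_mul [CommSemiring R] {g h : R[X]} {m n : ℕ}
    (hg : g.natDegree ≤ m) (hh : h.natDegree ≤ n) {q : Fin n → R[X]}
    (hq : ∀ j, (q j).degree < n) :
    coeffMatrix (Fin.append (xPowMultiples h m) fun j => g * q j) =
      Polynomial.sylvester g h m n *
        Matrix.reindex finSumFinEquiv finSumFinEquiv
          (Matrix.fromBlocks 1 0 0 (coeffMatrix q)) := by
  rw [sylvester_eq_coeffMatrix hg hh]
  ext i j
  refine j.addCases (fun j => ?_) fun j => ?_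
  · simp [coeffMatrix, Matrix.mul_apply, Fin.sum_univ_add, Matrix.one_apply]
  · simp [coeffMatrix, Matrix.mul_apply, Fin.sum_univ_add,
      sum_coeff_xPowMultiples_mul_coeff g (hq j)]

theorem det_coeffMatrix_append_mul [CommRing R] {g h : R[X]} {m n : ℕ} (hg : g.natDegree ≤ m)
    (hh : h.natDegree ≤ n) {q : Fin n → R[X]} (hq : ∀ j, (q j).degree < n) :
    (coeffMatrix (Fin.append (xPowMultiples h m) fun j => g * q j)).det =
      Polynomial.resultant g h m n * (coeffMatrix q).det := by
  rw [coeffMatrix_append_mul_eq_sylvester_mul hg hh hq, Matrix.det_mul, Matrix.det_reindex_self,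
    Matrix.det_fromBlocks_zero₂₁, Matrix.det_one, one_mul, Polynomial.resultant]

end CoeffMatrix

section Resultant

variable {R : Type*} [CommRing R]

lemma resultant_two_two (f g : R[X]) :
    Polynomial.resultant f g 2 2 =
      (f.coeff 2 * g.coeff 0 - f.coeff 0 * g.coeff 2) ^ 2 -
        (f.coeff 2 * g.coeff 1 - f.coeff 1 * g.coeff 2) *
          (f.coeff 1 * g.coeff 0 - f.coeff 0 * g.coeff 1) := by
  have sylvester_eq : Polynomial.sylvester f g 2 2 =
      !![g.coeff 0, 0, f.coeff 0, 0;
         g.coeff 1, g.coeff 0, f.coeff 1, f.coeff 0;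
         g.coeff 2, g.coeff 1, f.coeff 2, f.coeff 1;
         0, g.coeff 2, 0, f.coeff 2] := by
    ext i j
    fin_cases i <;> fin_cases j <;> simp [Polynomial.sylvester, Fin.addCases]
  rw [Polynomial.resultant, sylvester_eq, Matrix.det_succ_row_zero, Fin.sum_univ_four]
  simp only [Matrix.det_fin_three, Matrix.of_apply, Matrix.submatrix_apply, Matrix.cons_val,
    Fin.succAbove, Fin.coe_ofNat_eq_mod, Fin.reduceSucc, Fin.reduceCastSucc, Fin.reduceLT,
    ↓reduceIte]
  ring

lemma resultant_mul_right_of_natDegree_le {f g₁ g₂ : R[X]} {m n₁ n₂ : ℕ}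
    (hf : f.natDegree ≤ m) (hg₁ : g₁.natDegree ≤ n₁) (hg₂ : g₂.natDegree ≤ n₂) :
    Polynomial.resultant f (g₁ * g₂) m (n₁ + n₂) =
      Polynomial.resultant f g₁ m n₁ * Polynomial.resultant f g₂ m n₂ := by
  obtain ⟨k₁, rfl⟩ := Nat.exists_eq_add_of_le hg₁
  obtain ⟨k₂, rfl⟩ := Nat.exists_eq_add_of_le hg₂
  rw [add_add_add_comm, Polynomial.resultant_add_right_deg _ _ _ _ _ Polynomial.natDegree_mul_le,
    Polynomial.resultant_add_right_deg _ _ _ _ _ le_rfl,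
    Polynomial.resultant_add_right_deg _ _ _ _ _ le_rfl,
    Polynomial.resultant_mul_right _ _ _ _ hf]
  ring

end Resultant

/-- The dehomogenization `P(u, v) ↦ P(1, X)` of binary forms, under which `u ^ i * v ^ j` becomes
`X ^ j`. -/
def dehomogenize {R : Type*} [CommSemiring R] : MvPolynomial (Fin 2) R →ₐ[R] R[X] :=
  aeval ![1, Polynomial.X]

section Dehomogenize

variable {R : Type*} [CommSemiring R] {P : MvPolynomial (Fin 2) R} {n : ℕ}

@[simp]
lemma dehomogenize_X_zero : dehomogenize (X 0 : MvPolynomial (Fin 2) R) = 1 := by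
  simp [dehomogenize]

@[simp]
lemma dehomogenize_X_one : dehomogenize (X 1 : MvPolynomial (Fin 2) R) = Polynomial.X := by
  simp [dehomogenize]

lemma natDegree_dehomogenize_le (hP : P.IsHomogeneous n) : (dehomogenize P).natDegree ≤ n := by
  simpa [dehomogenize] using aeval_natDegree_le (n := 1) P hP.totalDegree_le ![1, Polynomial.X]
    (by simp [Fin.forall_fin_two, Polynomial.natDegree_X_le])

lemma coeff_dehomogenize (hP : P.IsHomogeneous n) {i j : ℕ} (hij : i + j = n) :
    (dehomogenize P).coeff j = P.coeff (Finsupp.single 0 i + Finsupp.single 1 j) := by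
  rw [dehomogenize, aeval_def, eval₂_eq', Polynomial.finsetSum_coeff]
  simp_rw [Fin.prod_univ_two]
  have coeff_term (d : Fin 2 →₀ ℕ) : (algebraMap R R[X] (P.coeff d) *
      (![1, Polynomial.X] 0 ^ d 0 * ![1, Polynomial.X] 1 ^ d 1)).coeff j =
        if d 1 = j then P.coeff d else 0 := by
    simp [Polynomial.algebraMap_eq, Polynomial.coeff_X_pow, eq_comm]
  simp_rw [coeff_term]
  refine (Finset.sum_eq_single (Finsupp.single 0 i + Finsupp.single 1 j) ?_ ?_).trans (by simp)
  · intro d hd hne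
    refine if_neg fun hdj => hne ?_
    have degree_d : d 0 + d 1 = n := by
      simpa [Finsupp.degree_eq_sum] using
        not_imp_comm.1 hP.coeff_eq_zero (mem_support_iff.1 hd)
    have hdi : d 0 = i := by lia
    ext a
    fin_cases a <;> simp [hdi, hdj]
  · simp +contextual

end Dehomogenize

section BinaryForms

variable {k : Type*} [Field k]

lemma coeffUV_eq_coeff_dehomogenize {P : MvPolynomial (Fin 2) k} {n i j : ℕ}
    (hP : P.IsHomogeneous n) (hij : i + j = n) :
    coeffUV i j P = (dehomogenize P).coeff j :=
  (coeff_dehomogenize hP hij).symm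

lemma Amat_eq_coeffMatrix {P₁ P₂ P₃ : MvPolynomial (Fin 2) k} (h₁ : P₁.IsHomogeneous 4)
    (h₂ : P₂.IsHomogeneous 4) (h₃ : P₃.IsHomogeneous 4) :
    Amat P₁ P₂ P₃ = coeffMatrix (Fin.append (xPowMultiples (dehomogenize P₁) 2)
      (Fin.append (xPowMultiples (dehomogenize P₂) 2) (xPowMultiples (dehomogenize P₃) 2))) := by
  have homogeneous (a : Fin 2) {P : MvPolynomial (Fin 2) k} (hP : P.IsHomogeneous 4) :
      (X a * P).IsHomogeneous 5 :=
    (isHomogeneous_X k a).mul hP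
  ext i j
  have hi : 5 - (i : ℕ) + i = 5 := by lia
  fin_cases j
  all_goals
    refine (coeffUV_eq_coeff_dehomogenize (homogeneous _ (by assumption)) hi).trans ?_
    simp [coeffMatrix, xPowMultiples, Fin.append, Fin.addCases]

lemma Res2_eq_resultant {Q Q' : MvPolynomial (Fin 2) k} (hQ : Q.IsHomogeneous 2)
    (hQ' : Q'.IsHomogeneous 2) :
    Res2 Q Q' = Polynomial.resultant (dehomogenize Q) (dehomogenize Q') 2 2 := by
  simp only [Res2, coeffUV_eq_coeff_dehomogenize hQ, coeffUV_eq_coeff_dehomogenize hQ',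
    Nat.reduceAdd]
  rw [resultant_two_two]
  ring

end BinaryForms

theorem stmt3_general {R : Type*} [CommRing R] {f g s : R[X]} {m n : ℕ} (hf : f.natDegree ≤ m)
    (hg : g.natDegree ≤ n) (hs : s.natDegree ≤ m) :
    (coeffMatrix (Fin.append (xPowMultiples (f ^ 2) n)
      (Fin.append (xPowMultiples (g * s) m) (xPowMultiples (g * f) m)))).det =
      Polynomial.resultant g f n m ^ 2 * Polynomial.resultant f s m m := by
  set q := Fin.append (xPowMultiples s m) (xPowMultiples f m)
  have degree_q (j) : (q j).degree < (m + m : ℕ) :=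
    j.addCases (fun j => by simpa only [q, Fin.append_left] using degree_xPowMultiples_lt hs j)
      fun j => by simpa only [q, Fin.append_right] using degree_xPowMultiples_lt hf j
  have g_mul_q : Fin.append (xPowMultiples (g * s) m) (xPowMultiples (g * f) m) =
      fun j => g * q j := by
    ext1 j
    refine j.addCases (fun j => ?_) fun j => ?_ <;>
      simp only [q, Fin.append_left, Fin.append_right, xPowMultiples, mul_left_comm]
  have natDegree_sq : (f ^ 2).natDegree ≤ m + m := by
    rw [sq]; exact Polynomial.natDegree_mul_le_of_le hf hf
  rw [g_mul_q, det_coeffMatrix_append_mul hg natDegree_sq degree_q, sq f,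
    resultant_mul_right_of_natDegree_le hg hf hf, ← sq, ← sylvester_eq_coeffMatrix hf hs]
  rfl

/-- tacnode case: for homogeneous degree-2 polynomials `Q₁, Q₂, S`
in `k[u,v]`, with `P₁ = Q₂²`, `P₂ = Q₁S`, `P₃ = Q₁Q₂`, one has
`det A_{P₁,P₂,P₃} = Res(Q₁,Q₂)² · Res(S,Q₂)`. -/
theorem stmt3 {k : Type*} [Field k] (Q₁ Q₂ S : MvPolynomial (Fin 2) k)
    (h₁ : Q₁.IsHomogeneous 2) (h₂ : Q₂.IsHomogeneous 2) (hS : S.IsHomogeneous 2) :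
    (Amat (Q₂ ^ 2) (Q₁ * S) (Q₁ * Q₂)).det = Res2 Q₁ Q₂ ^ 2 * Res2 S Q₂ := by
  rw [Amat_eq_coeffMatrix (h₂.pow 2) (h₁.mul hS) (h₁.mul h₂), map_pow, map_mul, map_mul,
    stmt3_general (natDegree_dehomogenize_le h₂) (natDegree_dehomogenize_le h₁)
      (natDegree_dehomogenize_le hS), Res2_eq_resultant h₁ h₂, Res2_eq_resultant hS h₂,
    Polynomial.resultant_comm (dehomogenize Q₂) (dehomogenize S)]
  norm_num
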